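/- Let α, β, μ ∈ ℝ. Let u : ℝ² → ℝ be a smooth function of (t,x) with u(t,x) + β ≠ 0 at every point, set m = u − u_xx, and suppose that at every point m_t + ( α u_x/(u+β)³ ) m + ∂_x( ( α/(u+β)² ) m ) = 0. Then at every point ∂_t( u_xx² + μ u_x² + (μ−1) u² + 2(μ−2)β u ) + ∂_x[ 2( (1−μ)u − (μ−2)β ) u_tx − 2 u_x u_t + α( m² + 2(μ−2)(u+β) m − (μ−2)(u+β)² )/(u+β)² ] = 0; that is, the gradient-energy density u_xx² + μ u_x² + (μ−1) u² + 2(μ−2)β u satisfies a local conservation law. -/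

import Mathlib

open Real

noncomputable section

/-- Partial derivative in the first (time) variable. -/
def pt (f : ℝ → ℝ → ℝ) (t x : ℝ) : ℝ := deriv (fun s => f s x) t

/-- Partial derivative in the second (space) variable. -/
def px (f : ℝ → ℝ → ℝ) (t x : ℝ) : ℝ := deriv (fun y => f t y) x

/-- The momentum variable `m = u - u_xx`. -/
def mf (u : ℝ → ℝ → ℝ) (t x : ℝ) : ℝ := u t x - px (px u) t x

/-!
Write `w = u + β`. Since `∂ₓ(α m / w²) + α uₓ m / w³ = (α / w) ∂ₓ(m / w)`, the equation says
`m_t + (α / w) ∂ₓ(m / w) = 0`. Multiply it by `2 (m + (μ - 2) w)`. The spatial term becomes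
`2 α (m / w + μ - 2) ∂ₓ(m / w)`, the `x`-derivative of `α ((m / w)² + 2 (μ - 2) m / w - (μ - 2))`.
In the time term `m_t = u_t - u_txx`, and integrating the products with `u_txx` by parts in `x`
leaves the `t`-derivative of the gradient energy and the remaining part of the flux.
-/

open scoped ContDiff Topology

section PartialDerivatives

variable {f : ℝ → ℝ → ℝ} {t x : ℝ}

lemma hasDerivAt_fst_of_differentiableAt_uncurry
    (hf : DifferentiableAt ℝ (Function.uncurry f) (t, x)) :
    HasDerivAt (fun s => f s x) (fderiv ℝ (Function.uncurry f) (t, x) (1, 0)) t :=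
  hf.hasFDerivAt.comp_hasDerivAt (f := fun s => (s, x)) t
    ((hasDerivAt_id t).prodMk (hasDerivAt_const t x))

lemma hasDerivAt_snd_of_differentiableAt_uncurry
    (hf : DifferentiableAt ℝ (Function.uncurry f) (t, x)) :
    HasDerivAt (fun y => f t y) (fderiv ℝ (Function.uncurry f) (t, x) (0, 1)) x :=
  hf.hasFDerivAt.comp_hasDerivAt (f := fun y => (t, y)) x
    ((hasDerivAt_const x t).prodMk (hasDerivAt_id x))

lemma hasDerivAt_pt (hf : DifferentiableAt ℝ (Function.uncurry f) (t, x)) :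
    HasDerivAt (fun s => f s x) (pt f t x) t :=
  (hasDerivAt_fst_of_differentiableAt_uncurry hf).differentiableAt.hasDerivAt

lemma hasDerivAt_px (hf : DifferentiableAt ℝ (Function.uncurry f) (t, x)) :
    HasDerivAt (fun y => f t y) (px f t x) x :=
  (hasDerivAt_snd_of_differentiableAt_uncurry hf).differentiableAt.hasDerivAt

lemma pt_eq_fderiv (hf : DifferentiableAt ℝ (Function.uncurry f) (t, x)) :
    pt f t x = fderiv ℝ (Function.uncurry f) (t, x) (1, 0) :=
  (hasDerivAt_fst_of_differentiableAt_uncurry hf).deriv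

lemma px_eq_fderiv (hf : DifferentiableAt ℝ (Function.uncurry f) (t, x)) :
    px f t x = fderiv ℝ (Function.uncurry f) (t, x) (0, 1) :=
  (hasDerivAt_snd_of_differentiableAt_uncurry hf).deriv

lemma eventually_differentiableAt_of_contDiffAt {F : ℝ × ℝ → ℝ} {z : ℝ × ℝ}
    (hF : ContDiffAt ℝ 1 F z) : ∀ᶠ p in 𝓝 z, DifferentiableAt ℝ F p :=
  (hF.eventually (by simp)).mono fun _ hp => hp.differentiableAt one_ne_zero

lemma uncurry_pt_eventuallyEq_fderiv (hf : ContDiffAt ℝ 1 (Function.uncurry f) (t, x)) :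
    Function.uncurry (pt f) =ᶠ[𝓝 (t, x)] fun p => fderiv ℝ (Function.uncurry f) p (1, 0) :=
  (eventually_differentiableAt_of_contDiffAt hf).mono fun _ hp => pt_eq_fderiv hp

lemma uncurry_px_eventuallyEq_fderiv (hf : ContDiffAt ℝ 1 (Function.uncurry f) (t, x)) :
    Function.uncurry (px f) =ᶠ[𝓝 (t, x)] fun p => fderiv ℝ (Function.uncurry f) p (0, 1) :=
  (eventually_differentiableAt_of_contDiffAt hf).mono fun _ hp => px_eq_fderiv hp

lemma contDiffAt_uncurry_pt {k n : ℕ∞ω} (hf : ContDiffAt ℝ n (Function.uncurry f) (t, x))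
    (hkn : k + 1 ≤ n) : ContDiffAt ℝ k (Function.uncurry (pt f)) (t, x) :=
  ((hf.fderiv_right hkn).clm_apply contDiffAt_const).congr_of_eventuallyEq
    (uncurry_pt_eventuallyEq_fderiv (hf.of_le (le_add_self.trans hkn)))

lemma contDiffAt_uncurry_px {k n : ℕ∞ω} (hf : ContDiffAt ℝ n (Function.uncurry f) (t, x))
    (hkn : k + 1 ≤ n) : ContDiffAt ℝ k (Function.uncurry (px f)) (t, x) :=
  ((hf.fderiv_right hkn).clm_apply contDiffAt_const).congr_of_eventuallyEq
    (uncurry_px_eventuallyEq_fderiv (hf.of_le (le_add_self.trans hkn)))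

lemma px_pt_eq_pt_px (hf : ContDiffAt ℝ 2 (Function.uncurry f) (t, x)) :
    px (pt f) t x = pt (px f) t x := by
  have hf₁ : ContDiffAt ℝ 1 (Function.uncurry f) (t, x) := hf.of_le one_le_two
  have hpt : ContDiffAt ℝ 1 (Function.uncurry (pt f)) (t, x) :=
    contDiffAt_uncurry_pt hf one_add_one_eq_two.le
  have hpx : ContDiffAt ℝ 1 (Function.uncurry (px f)) (t, x) :=
    contDiffAt_uncurry_px hf one_add_one_eq_two.le
  have hfderiv : DifferentiableAt ℝ (fderiv ℝ (Function.uncurry f)) (t, x) :=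
    (hf.fderiv_right one_add_one_eq_two.le).differentiableAt one_ne_zero
  have hsymm : IsSymmSndFDerivAt ℝ (Function.uncurry f) (t, x) :=
    hf.isSymmSndFDerivAt minSmoothness_of_isRCLikeNormedField.le
  rw [px_eq_fderiv (hpt.differentiableAt one_ne_zero),
    pt_eq_fderiv (hpx.differentiableAt one_ne_zero),
    (uncurry_pt_eventuallyEq_fderiv hf₁).fderiv_eq,
    (uncurry_px_eventuallyEq_fderiv hf₁).fderiv_eq,
    fderiv_clm_apply hfderiv (differentiableAt_const _),
    fderiv_clm_apply hfderiv (differentiableAt_const _)]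
  simpa using hsymm (0, 1) (1, 0)

end PartialDerivatives

section Quotient

variable {𝕜 : Type*} [NontriviallyNormedField 𝕜] {w m : 𝕜 → 𝕜} {x : 𝕜}

lemma mul_deriv_div_cube_mul_add_deriv_div_sq_mul (α : 𝕜) (hw : DifferentiableAt 𝕜 w x)
    (hm : DifferentiableAt 𝕜 m x) (hx : w x ≠ 0) :
    α * deriv w x / w x ^ 3 * m x + deriv (fun y => α / w y ^ 2 * m y) x =
      α / w x * deriv (fun y => m y / w y) x := by
  have hprod := ((hasDerivAt_const x α).fun_div (hw.hasDerivAt.fun_pow 2)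
    (pow_ne_zero 2 hx)).fun_mul hm.hasDerivAt
  rw [hprod.deriv, deriv_fun_div hm hw hx]
  field_simp
  ring

lemma hasDerivAt_quadratic_div_sq (α k : 𝕜) (hw : DifferentiableAt 𝕜 w x)
    (hm : DifferentiableAt 𝕜 m x) (hx : w x ≠ 0) :
    HasDerivAt (fun y => α * (m y ^ 2 + 2 * k * w y * m y - k * w y ^ 2) / w y ^ 2)
      (2 * α * (m x / w x + k) * deriv (fun y => m y / w y) x) x := by
  have hw' := hw.hasDerivAt
  have hm' := hm.hasDerivAt
  have hnum := (((hm'.fun_pow 2).fun_add ((hw'.const_mul (2 * k)).fun_mul hm')).fun_sub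
    ((hw'.fun_pow 2).const_mul k)).const_mul α
  refine (hnum.fun_div (hw'.fun_pow 2) (pow_ne_zero 2 hx)).congr_deriv ?_
  rw [deriv_fun_div hm hw hx]
  field_simp
  ring

end Quotient

/-- The left-hand side of the multi-peakon equation with `f = α uₓ / (u + β)³` and
`g = α / (u + β)²`. -/
def singularFamilyResidual (α β : ℝ) (u : ℝ → ℝ → ℝ) (t x : ℝ) : ℝ :=
  pt (mf u) t x + (α * px u t x / (u t x + β) ^ 3) * mf u t x
    + px (fun t' x' => (α / (u t' x' + β) ^ 2) * mf u t' x') t x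

/-- The gradient energy, a quadratic form in `u` and its first two `x`-derivatives plus a linear
term; it is the density `T` of the conservation law. -/
def gradientEnergyDensity (β μ : ℝ) (u : ℝ → ℝ → ℝ) (t x : ℝ) : ℝ :=
  (px (px u) t x) ^ 2 + μ * (px u t x) ^ 2 + (μ - 1) * (u t x) ^ 2 + 2 * (μ - 2) * β * u t x

/-- The flux `Φ` of the conservation law with density `gradientEnergyDensity`. -/
def gradientEnergyFlux (α β μ : ℝ) (u : ℝ → ℝ → ℝ) (t x : ℝ) : ℝ :=
  2 * ((1 - μ) * u t x - (μ - 2) * β) * pt (px u) t x - 2 * px u t x * pt u t x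
    + α * ((mf u t x) ^ 2 + 2 * (μ - 2) * (u t x + β) * mf u t x
        - (μ - 2) * (u t x + β) ^ 2) / (u t x + β) ^ 2

section ConservationLaw

variable {u : ℝ → ℝ → ℝ} {t x : ℝ}

lemma differentiableAt_uncurry_px_px (hu : ContDiffAt ℝ 3 (Function.uncurry u) (t, x)) :
    DifferentiableAt ℝ (Function.uncurry (px (px u))) (t, x) :=
  (contDiffAt_uncurry_px (contDiffAt_uncurry_px hu two_add_one_eq_three.le)
    one_add_one_eq_two.le).differentiableAt one_ne_zero

lemma pt_mf (hu : ContDiffAt ℝ 3 (Function.uncurry u) (t, x)) :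
    pt (mf u) t x = pt u t x - pt (px (px u)) t x :=
  ((hasDerivAt_pt (hu.differentiableAt three_ne_zero)).fun_sub
    (hasDerivAt_pt (differentiableAt_uncurry_px_px hu))).deriv

lemma differentiableAt_mf_snd (hu : ContDiffAt ℝ 3 (Function.uncurry u) (t, x)) :
    DifferentiableAt ℝ (fun y => mf u t y) x :=
  ((hasDerivAt_px (hu.differentiableAt three_ne_zero)).fun_sub
    (hasDerivAt_px (differentiableAt_uncurry_px_px hu))).differentiableAt

lemma singularFamilyResidual_eq (α : ℝ) {β : ℝ}
    (hu : ContDiffAt ℝ 3 (Function.uncurry u) (t, x)) (hne : u t x + β ≠ 0) :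
    singularFamilyResidual α β u t x =
      pt (mf u) t x + α / (u t x + β) * px (fun t' x' => mf u t' x' / (u t' x' + β)) t x := by
  have hw := (hasDerivAt_px (hu.differentiableAt three_ne_zero)).add_const β
  have hquot := mul_deriv_div_cube_mul_add_deriv_div_sq_mul α hw.differentiableAt
    (differentiableAt_mf_snd hu) hne
  rw [hw.deriv] at hquot
  rw [singularFamilyResidual, add_assoc]
  exact congrArg _ hquot

lemma pt_gradientEnergyDensity (β μ : ℝ) (hu : ContDiffAt ℝ 3 (Function.uncurry u) (t, x)) :
    pt (gradientEnergyDensity β μ u) t x =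
      2 * px (px u) t x * pt (px (px u)) t x + 2 * μ * px u t x * pt (px u) t x
        + 2 * ((μ - 1) * u t x + (μ - 2) * β) * pt u t x := by
  have hux : ContDiffAt ℝ 2 (Function.uncurry (px u)) (t, x) :=
    contDiffAt_uncurry_px hu two_add_one_eq_three.le
  have du := hasDerivAt_pt (hu.differentiableAt three_ne_zero)
  have dux := hasDerivAt_pt (hux.differentiableAt two_ne_zero)
  have duxx := hasDerivAt_pt (differentiableAt_uncurry_px_px hu)
  refine (((((duxx.fun_pow 2).fun_add ((dux.fun_pow 2).const_mul μ)).fun_add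
    ((du.fun_pow 2).const_mul (μ - 1))).fun_add (du.const_mul (2 * (μ - 2) * β))).congr_deriv
    ?_).deriv
  ring

lemma px_gradientEnergyFlux (α μ : ℝ) {β : ℝ}
    (hu : ContDiffAt ℝ 3 (Function.uncurry u) (t, x)) (hne : u t x + β ≠ 0) :
    px (gradientEnergyFlux α β μ u) t x =
      2 * ((1 - μ) * u t x - (μ - 2) * β) * pt (px (px u)) t x
        - 2 * μ * px u t x * pt (px u) t x - 2 * px (px u) t x * pt u t x
        + 2 * α * (mf u t x / (u t x + β) + (μ - 2))
          * px (fun t' x' => mf u t' x' / (u t' x' + β)) t x := by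
  have hux : ContDiffAt ℝ 2 (Function.uncurry (px u)) (t, x) :=
    contDiffAt_uncurry_px hu two_add_one_eq_three.le
  have hut : ContDiffAt ℝ 2 (Function.uncurry (pt u)) (t, x) :=
    contDiffAt_uncurry_pt hu two_add_one_eq_three.le
  have hutx : ContDiffAt ℝ 1 (Function.uncurry (pt (px u))) (t, x) :=
    contDiffAt_uncurry_pt hux one_add_one_eq_two.le
  have du := hasDerivAt_px (hu.differentiableAt three_ne_zero)
  have dux := hasDerivAt_px (hux.differentiableAt two_ne_zero)
  have dut := hasDerivAt_px (hut.differentiableAt two_ne_zero)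
  have dutx := hasDerivAt_px (hutx.differentiableAt one_ne_zero)
  rw [px_pt_eq_pt_px (hu.of_le (by norm_num))] at dut
  rw [px_pt_eq_pt_px hux] at dutx
  have dpolynomial := ((((du.const_mul (1 - μ)).sub_const ((μ - 2) * β)).const_mul 2).fun_mul
    dutx).fun_sub ((dux.const_mul 2).fun_mul dut)
  have dquotient := hasDerivAt_quadratic_div_sq α (μ - 2) (du.add_const β).differentiableAt
    (differentiableAt_mf_snd hu) hne
  refine ((dpolynomial.fun_add dquotient).congr_deriv ?_).deriv
  unfold px
  ring

lemma pt_gradientEnergyDensity_add_px_gradientEnergyFlux (α μ : ℝ) {β : ℝ}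
    (hu : ContDiffAt ℝ 3 (Function.uncurry u) (t, x)) (hne : u t x + β ≠ 0) :
    pt (gradientEnergyDensity β μ u) t x + px (gradientEnergyFlux α β μ u) t x =
      2 * (mf u t x + (μ - 2) * (u t x + β)) * singularFamilyResidual α β u t x := by
  have huxx : px (px u) t x = u t x - mf u t x := (sub_sub_cancel _ _).symm
  rw [pt_gradientEnergyDensity β μ hu, px_gradientEnergyFlux α μ hu hne,
    singularFamilyResidual_eq α hu hne, pt_mf hu, huxx]
  field_simp
  ring

theorem gradient_energy_conservation_singular_family_general {α β : ℝ} (μ : ℝ)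
    (hu : ContDiffAt ℝ 3 (Function.uncurry u) (t, x)) (hne : u t x + β ≠ 0)
    (heq : singularFamilyResidual α β u t x = 0) :
    pt (gradientEnergyDensity β μ u) t x + px (gradientEnergyFlux α β μ u) t x = 0 := by
  rw [pt_gradientEnergyDensity_add_px_gradientEnergyFlux α μ hu hne, heq, mul_zero]

end ConservationLaw

/-- gradient-energy conservation law for the family
`m_t + (α u_x/(u+β)³) m + ∂_x((α/(u+β)²) m) = 0`. -/
theorem gradient_energy_conservation_singular_family
    (α β μ : ℝ)
    (u : ℝ → ℝ → ℝ) (hu : ContDiff ℝ (⊤ : ℕ∞) (Function.uncurry u))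
    (hne : ∀ t x : ℝ, u t x + β ≠ 0)
    (heq : ∀ t x : ℝ,
      pt (mf u) t x
        + (α * px u t x / (u t x + β)^3) * mf u t x
        + px (fun t' x' => (α / (u t' x' + β)^2) * mf u t' x') t x = 0) :
    ∀ t x : ℝ,
      pt (fun t' x' =>
          (px (px u) t' x')^2 + μ * (px u t' x')^2 + (μ - 1) * (u t' x')^2
            + 2 * (μ - 2) * β * u t' x') t x
        + px (fun t' x' =>
            2 * ((1 - μ) * u t' x' - (μ - 2) * β) * pt (px u) t' x'
              - 2 * px u t' x' * pt u t' x'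
              + α * ((mf u t' x')^2 + 2 * (μ - 2) * (u t' x' + β) * mf u t' x'
                  - (μ - 2) * (u t' x' + β)^2) / (u t' x' + β)^2) t x = 0 :=
  fun t x => gradient_energy_conservation_singular_family_general μ
    (mod_cast (contDiff_infty.1 hu 3).contDiffAt) (hne t x) (heq t x)

end
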